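/- Let N : ℝ → ℝ be Lebesgue integrable, let α ∈ ℝ and δ > 0, and suppose N is continuously differentiable on the open interval (α − δ, α + δ) with sup_{x ∈ (α−δ, α+δ)} |N′(x)| < ∞. Then ∫_ℝ η²·(z − α)·N(z) / ((z − α)² + η²)² dz tends to 0 as η → 0⁺. -/

import Mathlib

open MeasureTheory

open Filter Module Bornology Topology

/-! With `c = 1 / η`, the kernel is the rescaling `c φ(c (z - α))` of the integrable odd function
`φ(u) = u / (1 + u²)²`. Such rescalings concentrate at `α`, so the integral tends to `(∫ φ) N(α)`
as soon as `N` is continuous at `α`; and `∫ φ = 0` because `φ` is odd. -/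

section Rescaling

variable {E F : Type*} [NormedAddCommGroup E] [NormedSpace ℝ E]
  [NormedAddCommGroup F] [NormedSpace ℝ F] [FiniteDimensional ℝ F]
  [MeasurableSpace F] [BorelSpace F] {μ : Measure F} [μ.IsAddHaarMeasure]
  {φ : F → ℝ} {g : F → E}

lemma integrable_rescaled_smul (hφ : Integrable φ μ) {C : ℝ} (hC : ∀ x, |φ x| ≤ C)
    (hg : Integrable g μ) {c : ℝ} (hc : c ≠ 0) :
    Integrable (fun x ↦ (c ^ finrank ℝ F * φ (c • x)) • g x) μ := by
  have bound (x : F) : ‖c ^ finrank ℝ F * φ (c • x)‖ ≤ |c ^ finrank ℝ F| * C := by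
    rw [Real.norm_eq_abs, abs_mul]
    gcongr
    exact hC _
  exact hg.bdd_smul _ ((hφ.comp_smul hc).const_mul _).aestronglyMeasurable (.of_forall bound)

variable [CompleteSpace E]

lemma tendsto_integral_rescaled_smul_of_nonneg (hφ₀ : ∀ x, 0 ≤ φ x) (hφ : Integrable φ μ)
    (hdecay : Tendsto (fun x ↦ ‖x‖ ^ finrank ℝ F * φ x) (cobounded F) (𝓝 0))
    (hg : Integrable g μ) (hg₀ : ContinuousAt g 0) :
    Tendsto (fun c : ℝ ↦ ∫ x, (c ^ finrank ℝ F * φ (c • x)) • g x ∂μ) atTop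
      (𝓝 ((∫ x, φ x ∂μ) • g 0)) := by
  set m := ∫ x, φ x ∂μ with hm
  rcases eq_or_ne m 0 with hm₀ | hm₀
  · rw [hm₀, zero_smul]
    refine tendsto_const_nhds.congr' ?_
    filter_upwards [eventually_ne_atTop 0] with c hc
    have rescaled_ae_zero : (fun x ↦ φ (c • x)) =ᵐ[μ] 0 := by
      rw [← integral_eq_zero_iff_of_nonneg (fun x ↦ hφ₀ _) (hφ.comp_smul hc),
        Measure.integral_comp_smul, ← hm, hm₀, smul_zero]
    refine (integral_eq_zero_of_ae ?_).symm
    filter_upwards [rescaled_ae_zero] with x hx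
    simp only [hx, Pi.zero_apply, mul_zero, zero_smul]
  · have normalized := tendsto_integral_comp_smul_smul_of_integrable (μ := μ)
      (φ := fun x ↦ m⁻¹ * φ x) (fun x ↦ mul_nonneg (inv_nonneg.2 (integral_nonneg hφ₀)) (hφ₀ x))
      (by rw [integral_const_mul, ← hm, inv_mul_cancel₀ hm₀])
      (by simpa only [mul_left_comm, mul_zero] using hdecay.const_mul m⁻¹) hg hg₀
    refine (normalized.const_smul m).congr fun c ↦ ?_
    simp only [← integral_smul, smul_smul, mul_left_comm, mul_inv_cancel_left₀ hm₀]

lemma tendsto_integral_rescaled_smul (hφ : Integrable φ μ) {C : ℝ} (hC : ∀ x, |φ x| ≤ C)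
    (hdecay : Tendsto (fun x ↦ ‖x‖ ^ finrank ℝ F * φ x) (cobounded F) (𝓝 0))
    (hg : Integrable g μ) (hg₀ : ContinuousAt g 0) :
    Tendsto (fun c : ℝ ↦ ∫ x, (c ^ finrank ℝ F * φ (c • x)) • g x ∂μ) atTop
      (𝓝 ((∫ x, φ x ∂μ) • g 0)) := by
  have decay_abs : Tendsto (fun x ↦ ‖x‖ ^ finrank ℝ F * |φ x|) (cobounded F) (𝓝 0) := by
    simpa only [abs_mul, abs_pow, abs_norm, abs_zero] using hdecay.abs
  have decay_add : Tendsto (fun x ↦ ‖x‖ ^ finrank ℝ F * (|φ x| + φ x)) (cobounded F) (𝓝 0) := by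
    simpa only [mul_add, add_zero] using decay_abs.add hdecay
  -- `φ = (|φ| + φ) - |φ|` is a difference of nonnegative kernels.
  have lim_abs := tendsto_integral_rescaled_smul_of_nonneg (fun x ↦ abs_nonneg (φ x)) hφ.abs
    decay_abs hg hg₀
  have lim_add := tendsto_integral_rescaled_smul_of_nonneg
    (fun x ↦ neg_le_iff_add_nonneg'.1 (neg_abs_le (φ x))) (hφ.abs.add hφ) decay_add hg hg₀
  have mass : (∫ x, |φ x| + φ x ∂μ) • g 0 - (∫ x, |φ x| ∂μ) • g 0 = (∫ x, φ x ∂μ) • g 0 := by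
    rw [integral_add hφ.abs hφ, add_smul, add_sub_cancel_left]
  rw [← mass]
  refine (lim_add.sub lim_abs).congr' ?_
  filter_upwards [eventually_ne_atTop 0] with c hc
  have int_abs := integrable_rescaled_smul hφ.abs (fun x ↦ (abs_abs (φ x)).trans_le (hC x)) hg hc
  have int_φ := integrable_rescaled_smul hφ hC hg hc
  simp only [mul_add, add_smul]
  rw [integral_add int_abs int_φ, add_sub_cancel_left]

end Rescaling

lemma integral_eq_zero_of_odd {G E : Type*} [AddGroup G] [MeasurableSpace G] [MeasurableNeg G]
    [NormedAddCommGroup E] [NormedSpace ℝ E] {μ : Measure G} [μ.IsNegInvariant] {f : G → E}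
    (hf : f.Odd) : ∫ x, f x ∂μ = 0 := by
  have : IsAddTorsionFree E := .of_isTorsionFree ℝ E
  have eq_neg : ∫ x, f x ∂μ = -∫ x, f x ∂μ := by
    conv_lhs => rw [← integral_neg_eq_self]
    simp only [hf _, integral_neg]
  exact self_eq_neg.1 eq_neg

/-- The derivative of the Lorentzian `u ↦ 1 / (1 + u²)` multiplied by `-1/2`, so that rescaling it
to width `η` around `α` gives exactly `z ↦ η² (z - α) / ((z - α)² + η²)²`. -/
noncomputable def lorentzianSlope (u : ℝ) : ℝ := u / (1 + u ^ 2) ^ 2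

namespace lorentzianSlope

lemma odd : lorentzianSlope.Odd := fun u ↦ by
  simp only [lorentzianSlope, neg_sq, neg_div]

lemma abs_le (u : ℝ) : |lorentzianSlope u| ≤ (1 + u ^ 2)⁻¹ := by
  rw [lorentzianSlope, abs_div, abs_of_pos (by positivity : 0 < (1 + u ^ 2) ^ 2), inv_eq_one_div,
    div_le_div_iff₀ (by positivity) (by positivity)]
  have : |u| ≤ 1 + u ^ 2 := by nlinarith [sq_abs u, sq_nonneg (|u| - 1)]
  nlinarith [sq_nonneg u]

lemma abs_le_one (u : ℝ) : |lorentzianSlope u| ≤ 1 :=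
  (abs_le u).trans (inv_le_one_of_one_le₀ (le_add_of_nonneg_right (sq_nonneg u)))

lemma integrable : Integrable lorentzianSlope := by
  refine integrable_inv_one_add_sq.mono' ?_ (.of_forall abs_le)
  exact Measurable.aestronglyMeasurable (by unfold lorentzianSlope; fun_prop)

lemma tendsto_norm_mul_cobounded :
    Tendsto (fun u ↦ ‖u‖ * lorentzianSlope u) (cobounded ℝ) (𝓝 0) := by
  have bound (u : ℝ) : ‖‖u‖ * lorentzianSlope u‖ ≤ (‖u‖)⁻¹ := by
    rw [norm_mul, norm_norm, Real.norm_eq_abs, Real.norm_eq_abs]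
    rcases eq_or_ne u 0 with rfl | hu
    · simp only [abs_zero, zero_mul, inv_zero, le_refl]
    calc |u| * |lorentzianSlope u| ≤ |u| * (1 + u ^ 2)⁻¹ := by gcongr; exact abs_le u
      _ ≤ |u| * (u ^ 2)⁻¹ := by gcongr; exact le_add_of_nonneg_left zero_le_one
      _ = |u|⁻¹ := by rw [← sq_abs]; field_simp
  exact squeeze_zero_norm bound tendsto_norm_cobounded_atTop.inv_tendsto_atTop

lemma inv_mul_inv_mul {η : ℝ} (hη : η ≠ 0) (t : ℝ) :
    η⁻¹ * lorentzianSlope (η⁻¹ * t) = η ^ 2 * t / (t ^ 2 + η ^ 2) ^ 2 := by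
  unfold lorentzianSlope
  field_simp
  ring

end lorentzianSlope

theorem statement16_general {E : Type*} [NormedAddCommGroup E] [NormedSpace ℝ E] [CompleteSpace E]
    {N : ℝ → E} (hN : Integrable N) {α : ℝ} (hα : ContinuousAt N α) :
    Tendsto (fun η : ℝ ↦ ∫ z, (η ^ 2 * (z - α) / ((z - α) ^ 2 + η ^ 2) ^ 2) • N z)
      (𝓝[>] 0) (𝓝 0) := by
  have hα₀ : ContinuousAt (fun t ↦ N (t + α)) 0 :=
    ContinuousAt.comp (by rwa [zero_add]) (by fun_prop)
  have lim := tendsto_integral_rescaled_smul lorentzianSlope.integrable lorentzianSlope.abs_le_one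
    (by simpa only [finrank_self, pow_one] using lorentzianSlope.tendsto_norm_mul_cobounded)
    (hN.comp_add_right α) hα₀
  rw [integral_eq_zero_of_odd lorentzianSlope.odd, zero_smul] at lim
  refine (lim.comp tendsto_inv_nhdsGT_zero).congr' ?_
  filter_upwards [self_mem_nhdsWithin] with η (hη : 0 < η)
  rw [← integral_add_right_eq_self _ α]
  simp only [Function.comp_apply, finrank_self, pow_one, smul_eq_mul, add_sub_cancel_right,
    lorentzianSlope.inv_mul_inv_mul hη.ne']

/-- Let `N : ℝ → ℝ` be Lebesgue integrable, continuously differentiable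
on `(α - δ, α + δ)` with bounded derivative there. Then
`∫ η²·(z - α)·N(z)/((z - α)² + η²)² dz → 0` as `η → 0⁺`. -/
theorem statement16 (N : ℝ → ℝ) (hN : Integrable N) (α δ : ℝ) (hδ : 0 < δ)
    (hsmooth : ContDiffOn ℝ 1 N (Set.Ioo (α - δ) (α + δ)))
    (hbdd : ∃ C : ℝ, ∀ x ∈ Set.Ioo (α - δ) (α + δ), |deriv N x| ≤ C) :
    Filter.Tendsto
      (fun η : ℝ => ∫ z : ℝ, η ^ 2 * (z - α) * N z / ((z - α) ^ 2 + η ^ 2) ^ 2)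
      (nhdsWithin 0 (Set.Ioi 0)) (nhds 0) := by
  simpa only [smul_eq_mul, div_mul_eq_mul_div] using statement16_general hN
    (hsmooth.continuousOn.continuousAt (Ioo_mem_nhds (sub_lt_self α hδ) (lt_add_of_pos_right α hδ)))
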